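/- Let F_i = (1−p_i)δ_0 + p_i V_i, i = 1,…,n, with probability measures V_i on ℝ^d and p_i ∈ [0,1]. Then d_TV(∏_{i=1}^n F_i, ∏_{i=1}^n e(F_i)) ≤ ∑_{i=1}^n p_i², where products denote convolutions. (Le Cam's theorem on Poisson approximation of sums of independent rare-event indicators with marks.) -/

import Mathlib

/-!
A measure `μ` is called `c`-dominated by `ν` when `μ A ≤ ν A + c` for every measurable `A`. For
probability measures, passing to complements shows that this one-sided bound already gives
`dTV μ ν ≤ c`. Convolving with a probability measure averages translates, so it preserves
`c`-domination; exchanging one factor at a time, the constants add up over a convolution product.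

It remains to treat one factor `F = (1 - p) δ₀ + p V`. Induction on `m` gives
`F^{*m} ≥ (1 - p)^m δ₀ + m p (1 - p)^(m-1) V` (at most one of the `m` factors is marked), and summing
against the Poisson weights `e⁻¹ / m!` gives `e(F) ≥ e^{-p} δ₀ + p e^{-p} V`. Since
`1 - p ≤ e^{-p}`, both `(1 - p) δ₀ ≤ e^{-p} δ₀` and `p V ≤ p e^{-p} V + p² V` hold, so `F` is
`p²`-dominated by `e(F)`.
-/

open MeasureTheory

noncomputable def convPow {d : ℕ} (H : Measure (Fin d → ℝ)) : ℕ → Measure (Fin d → ℝ)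
  | 0 => Measure.dirac 0
  | m + 1 => (convPow H m).conv H

noncomputable def epois1 {d : ℕ} (H : Measure (Fin d → ℝ)) : Measure (Fin d → ℝ) :=
  Measure.sum fun m => (ENNReal.ofReal (Real.exp (-1) / m.factorial)) • convPow H m

noncomputable def convList {d : ℕ} (l : List (Measure (Fin d → ℝ))) : Measure (Fin d → ℝ) :=
  l.foldr Measure.conv (Measure.dirac 0)

noncomputable def dTV {d : ℕ} (μ ν : Measure (Fin d → ℝ)) : ℝ :=
  ⨆ A : {s : Set (Fin d → ℝ) // MeasurableSet s}, |(μ A).toReal - (ν A).toReal|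

open scoped ENNReal

section LeCam

variable {d : ℕ}

/-- The one-sided bound `μ A ≤ ν A + c` on all measurable sets; for probability measures it is
equivalent to total variation distance at most `c`. -/
def DominatedUpTo (μ ν : Measure (Fin d → ℝ)) (c : ℝ≥0∞) : Prop :=
  ∀ A, MeasurableSet A → μ A ≤ ν A + c

lemma conv_apply_eq_lintegral (μ ν : Measure (Fin d → ℝ)) [SFinite ν] {A : Set (Fin d → ℝ)}
    (hA : MeasurableSet A) :
    (μ.conv ν) A = ∫⁻ x, ν ((fun y => x + y) ⁻¹' A) ∂μ := by
  rw [Measure.conv, Measure.map_apply measurable_add hA,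
    Measure.prod_apply (measurable_add hA)]
  rfl

lemma DominatedUpTo.trans {μ ν ρ : Measure (Fin d → ℝ)} {a b : ℝ≥0∞}
    (h₁ : DominatedUpTo μ ν a) (h₂ : DominatedUpTo ν ρ b) : DominatedUpTo μ ρ (a + b) := by
  intro A hA
  calc μ A ≤ ν A + a := h₁ A hA
    _ ≤ (ρ A + b) + a := by gcongr; exact h₂ A hA
    _ = ρ A + (a + b) := by ring

lemma DominatedUpTo.conv_left {μ ν : Measure (Fin d → ℝ)} [SFinite μ] [SFinite ν] {c : ℝ≥0∞}
    (h : DominatedUpTo μ ν c) (ρ : Measure (Fin d → ℝ)) [IsProbabilityMeasure ρ] :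
    DominatedUpTo (ρ.conv μ) (ρ.conv ν) c := by
  intro A hA
  rw [conv_apply_eq_lintegral _ _ hA, conv_apply_eq_lintegral _ _ hA]
  calc ∫⁻ x, μ ((fun y => x + y) ⁻¹' A) ∂ρ
      ≤ ∫⁻ x, (ν ((fun y => x + y) ⁻¹' A) + c) ∂ρ :=
        lintegral_mono fun x => h _ (measurable_const_add x hA)
    _ = _ := by rw [lintegral_add_right _ measurable_const]; simp

lemma DominatedUpTo.conv {μ₁ μ₂ ν₁ ν₂ : Measure (Fin d → ℝ)} [IsProbabilityMeasure μ₁]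
    [IsProbabilityMeasure μ₂] [IsProbabilityMeasure ν₁] [IsProbabilityMeasure ν₂] {a b : ℝ≥0∞}
    (h₁ : DominatedUpTo μ₁ ν₁ a) (h₂ : DominatedUpTo μ₂ ν₂ b) :
    DominatedUpTo (μ₁.conv μ₂) (ν₁.conv ν₂) (a + b) := by
  have h : DominatedUpTo (μ₁.conv μ₂) (ν₁.conv μ₂) a := by
    rw [Measure.conv_comm μ₁, Measure.conv_comm ν₁]
    exact h₁.conv_left μ₂
  exact h.trans (h₂.conv_left ν₁)

lemma DominatedUpTo.dTV_le {μ ν : Measure (Fin d → ℝ)} [IsProbabilityMeasure μ]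
    [IsProbabilityMeasure ν] {c : ℝ} (hc : 0 ≤ c) (h : DominatedUpTo μ ν (ENNReal.ofReal c)) :
    dTV μ ν ≤ c := by
  have key : ∀ A, MeasurableSet A → μ.real A ≤ ν.real A + c := by
    intro A hA
    have := ENNReal.toReal_mono (by finiteness) (h A hA)
    rwa [ENNReal.toReal_add (by finiteness) (by finiteness), ENNReal.toReal_ofReal hc] at this
  refine Real.iSup_le (fun A => ?_) hc
  have h₁ := key A A.2
  have h₂ := key _ A.2.compl
  rw [probReal_compl_eq_one_sub A.2, probReal_compl_eq_one_sub A.2] at h₂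
  change |μ.real A - ν.real A| ≤ c
  rw [abs_le]
  constructor <;> linarith

instance isProbabilityMeasure_convPow (H : Measure (Fin d → ℝ)) [IsProbabilityMeasure H] (m : ℕ) :
    IsProbabilityMeasure (convPow H m) := by
  induction m with
  | zero => rw [convPow]; infer_instance
  | succ m ih => rw [convPow]; infer_instance

lemma hasSum_poisson_weights (q : ℝ) :
    HasSum (fun m : ℕ => Real.exp (-1) / m.factorial * q ^ m) (Real.exp (q - 1)) := by
  have h := (NormedSpace.expSeries_div_hasSum_exp (𝔸 := ℝ) q).mul_left (Real.exp (-1))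
  rw [← Real.exp_eq_exp_ℝ, ← Real.exp_add, show -1 + q = q - 1 by ring] at h
  refine h.congr_fun fun m => ?_
  ring

lemma hasSum_poisson_weights_mul (p q : ℝ) :
    HasSum (fun m : ℕ => Real.exp (-1) / m.factorial * (m * p * q ^ (m - 1)))
      (p * Real.exp (q - 1)) := by
  rw [← hasSum_nat_add_iff' 1]
  simp only [Finset.range_one, Finset.sum_singleton, Nat.cast_zero, zero_mul, mul_zero, sub_zero]
  refine ((hasSum_poisson_weights q).mul_left p).congr_fun fun m => ?_
  have : (m.factorial : ℝ) ≠ 0 := by positivity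
  rw [Nat.factorial_succ, Nat.add_sub_cancel]
  push_cast
  field_simp

instance isProbabilityMeasure_epois1 (H : Measure (Fin d → ℝ)) [IsProbabilityMeasure H] :
    IsProbabilityMeasure (epois1 H) := by
  constructor
  have h := hasSum_poisson_weights 1
  simp only [one_pow, mul_one, sub_self, Real.exp_zero] at h
  rw [epois1, Measure.sum_apply _ MeasurableSet.univ]
  simp only [Measure.smul_apply, measure_univ, smul_eq_mul, mul_one]
  rw [← ENNReal.ofReal_tsum_of_nonneg (fun m => by positivity) h.summable, h.tsum_eq,
    ENNReal.ofReal_one]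

/-- The measure `(1 - p) δ₀ + p V`: the law of a mark `V` that occurs with probability `p`. -/
noncomputable def rareMark (p : ℝ) (V : Measure (Fin d → ℝ)) : Measure (Fin d → ℝ) :=
  ENNReal.ofReal (1 - p) • Measure.dirac 0 + ENNReal.ofReal p • V

lemma isProbabilityMeasure_rareMark {p : ℝ} (hp0 : 0 ≤ p) (hp1 : p ≤ 1)
    (V : Measure (Fin d → ℝ)) [IsProbabilityMeasure V] : IsProbabilityMeasure (rareMark p V) := by
  constructor
  simp only [rareMark, Measure.add_apply, Measure.smul_apply, measure_univ, smul_eq_mul, mul_one]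
  rw [← ENNReal.ofReal_add (by linarith) hp0]
  simp

lemma conv_rareMark_apply (p : ℝ) (μ V : Measure (Fin d → ℝ)) [SFinite μ] [IsProbabilityMeasure V]
    (A : Set (Fin d → ℝ)) :
    (μ.conv (rareMark p V)) A
      = ENNReal.ofReal (1 - p) * μ A + ENNReal.ofReal p * (μ.conv V) A := by
  have h : μ.conv (rareMark p V)
      = ENNReal.ofReal (1 - p) • μ + ENNReal.ofReal p • μ.conv V := by
    rw [rareMark, Measure.conv_add, Measure.conv_comm μ, Measure.conv_comm μ,
      Measure.conv_smul_left, Measure.conv_smul_left, Measure.dirac_zero_conv, Measure.conv_comm V]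
  rw [h]
  rfl

lemma smul_dirac_le_convPow_rareMark {p : ℝ} (hp1 : p ≤ 1) (V : Measure (Fin d → ℝ))
    [IsProbabilityMeasure V] (hF : IsProbabilityMeasure (rareMark p V)) (m : ℕ) :
    ENNReal.ofReal ((1 - p) ^ m) • Measure.dirac 0 ≤ convPow (rareMark p V) m := by
  induction m with
  | zero => simp [convPow]
  | succ m ih =>
    rw [Measure.le_iff] at ih ⊢
    intro A hA
    rw [convPow, conv_rareMark_apply p _ V A]
    refine le_add_right ?_
    calc _ = ENNReal.ofReal (1 - p) * ((ENNReal.ofReal ((1 - p) ^ m) • Measure.dirac 0 :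
            Measure (Fin d → ℝ)) A) := by
          rw [pow_succ', ENNReal.ofReal_mul (by linarith), mul_smul]; rfl
      _ ≤ _ := mul_le_mul_right (ih A hA) _

/-- Keeping from the expansion of `F^{*m}` only the terms in which at most one factor is `V`.
For `m = 0` the truncated exponent `m - 1` is harmless, as its coefficient vanishes. -/
lemma le_convPow_rareMark_apply {p : ℝ} (hp0 : 0 ≤ p) (hp1 : p ≤ 1) (V : Measure (Fin d → ℝ))
    [IsProbabilityMeasure V] (hF : IsProbabilityMeasure (rareMark p V)) (m : ℕ)
    {A : Set (Fin d → ℝ)} (hA : MeasurableSet A) :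
    ENNReal.ofReal ((1 - p) ^ m) * Measure.dirac 0 A
      + ENNReal.ofReal (m * p * (1 - p) ^ (m - 1)) * V A ≤ convPow (rareMark p V) m A := by
  have hq : 0 ≤ 1 - p := by linarith
  induction m with
  | zero => simp [convPow]
  | succ m ih =>
    have hV : ENNReal.ofReal ((1 - p) ^ m) * V A ≤ ((convPow (rareMark p V) m).conv V) A := by
      rw [conv_apply_eq_lintegral _ _ hA]
      refine le_trans (le_of_eq ?_)
        (lintegral_mono' (smul_dirac_le_convPow_rareMark hp1 V hF m) le_rfl)
      rw [lintegral_smul_measure, lintegral_dirac]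
      simp
    rw [convPow, conv_rareMark_apply p _ V A]
    have hcoef : ((m + 1 : ℕ) : ℝ) * p * (1 - p) ^ (m + 1 - 1)
        = (1 - p) * (m * p * (1 - p) ^ (m - 1)) + p * (1 - p) ^ m := by
      cases m with
      | zero => simp
      | succ k => simp only [Nat.add_sub_cancel]; push_cast; ring
    rw [hcoef, ENNReal.ofReal_add (by positivity) (by positivity), ENNReal.ofReal_mul hq,
      ENNReal.ofReal_mul hp0, pow_succ', ENNReal.ofReal_mul hq]
    calc _ = ENNReal.ofReal (1 - p) * (ENNReal.ofReal ((1 - p) ^ m) * Measure.dirac 0 A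
            + ENNReal.ofReal (m * p * (1 - p) ^ (m - 1)) * V A)
          + ENNReal.ofReal p * (ENNReal.ofReal ((1 - p) ^ m) * V A) := by ring
      _ ≤ _ := by gcongr

/-- `e(F)` is the compound Poisson law with `Poisson(p)` many marks drawn from `V`; the left side is
its part with at most one mark. -/
lemma le_epois1_rareMark_apply {p : ℝ} (hp0 : 0 ≤ p) (hp1 : p ≤ 1) (V : Measure (Fin d → ℝ))
    [IsProbabilityMeasure V] (hF : IsProbabilityMeasure (rareMark p V))
    {A : Set (Fin d → ℝ)} (hA : MeasurableSet A) :
    ENNReal.ofReal (Real.exp (-p)) * Measure.dirac 0 A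
      + ENNReal.ofReal (p * Real.exp (-p)) * V A ≤ epois1 (rareMark p V) A := by
  have hq : 0 ≤ 1 - p := by linarith
  have h₀ := hasSum_poisson_weights (1 - p)
  have h₁ := hasSum_poisson_weights_mul p (1 - p)
  rw [show 1 - p - 1 = -p by ring] at h₀ h₁
  rw [← h₁.tsum_eq, ← h₀.tsum_eq,
    ENNReal.ofReal_tsum_of_nonneg (fun m => by positivity) h₀.summable,
    ENNReal.ofReal_tsum_of_nonneg (fun m => by positivity) h₁.summable,
    ← ENNReal.tsum_mul_right, ← ENNReal.tsum_mul_right, ← ENNReal.tsum_add,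
    epois1, Measure.sum_apply _ hA]
  refine ENNReal.tsum_le_tsum fun m => ?_
  have hw : 0 ≤ Real.exp (-1) / m.factorial := by positivity
  rw [ENNReal.ofReal_mul hw, ENNReal.ofReal_mul hw, mul_assoc, mul_assoc, ← mul_add,
    Measure.smul_apply, smul_eq_mul]
  gcongr
  exact le_convPow_rareMark_apply hp0 hp1 V hF m hA

lemma dominatedUpTo_epois1_rareMark {p : ℝ} (hp0 : 0 ≤ p) (hp1 : p ≤ 1)
    (V : Measure (Fin d → ℝ)) [IsProbabilityMeasure V] :
    DominatedUpTo (rareMark p V) (epois1 (rareMark p V)) (ENNReal.ofReal (p ^ 2)) := by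
  have hF := isProbabilityMeasure_rareMark hp0 hp1 V
  intro A hA
  have hexp : 1 - p ≤ Real.exp (-p) := by linarith [Real.add_one_le_exp (-p)]
  have hcoef : p ≤ p * Real.exp (-p) + p ^ 2 := by nlinarith
  calc rareMark p V A
      = ENNReal.ofReal (1 - p) * Measure.dirac 0 A + ENNReal.ofReal p * V A := rfl
    _ ≤ ENNReal.ofReal (Real.exp (-p)) * Measure.dirac 0 A
          + ENNReal.ofReal (p * Real.exp (-p) + p ^ 2) * V A := by gcongr
    _ = (ENNReal.ofReal (Real.exp (-p)) * Measure.dirac 0 A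
          + ENNReal.ofReal (p * Real.exp (-p)) * V A) + ENNReal.ofReal (p ^ 2) * V A := by
        rw [ENNReal.ofReal_add (by positivity) (by positivity)]; ring
    _ ≤ epois1 (rareMark p V) A + ENNReal.ofReal (p ^ 2) * 1 := by
        gcongr
        · exact le_epois1_rareMark_apply hp0 hp1 V hF hA
        · exact prob_le_one
    _ = _ := by rw [mul_one]

lemma isProbabilityMeasure_convList_ofFn {n : ℕ} (μ : Fin n → Measure (Fin d → ℝ))
    (hμ : ∀ i, IsProbabilityMeasure (μ i)) : IsProbabilityMeasure (convList (List.ofFn μ)) := by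
  induction n with
  | zero => simp only [List.ofFn_zero, convList, List.foldr_nil]; infer_instance
  | succ n ih =>
    have := hμ 0
    have := ih (fun i => μ i.succ) fun i => hμ i.succ
    rw [List.ofFn_succ]
    change IsProbabilityMeasure ((μ 0).conv (convList _))
    infer_instance

lemma dominatedUpTo_convList_ofFn {n : ℕ} (μ ν : Fin n → Measure (Fin d → ℝ))
    (hμ : ∀ i, IsProbabilityMeasure (μ i)) (hν : ∀ i, IsProbabilityMeasure (ν i))
    (c : Fin n → ℝ≥0∞) (h : ∀ i, DominatedUpTo (μ i) (ν i) (c i)) :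
    DominatedUpTo (convList (List.ofFn μ)) (convList (List.ofFn ν)) (∑ i, c i) := by
  induction n with
  | zero =>
    intro A _
    simp
  | succ n ih =>
    have := hμ 0
    have := hν 0
    have := isProbabilityMeasure_convList_ofFn (fun i => μ i.succ) fun i => hμ i.succ
    have := isProbabilityMeasure_convList_ofFn (fun i => ν i.succ) fun i => hν i.succ
    rw [List.ofFn_succ, List.ofFn_succ, Fin.sum_univ_succ]
    change DominatedUpTo ((μ 0).conv (convList _)) ((ν 0).conv (convList _)) _
    exact (h 0).conv (ih _ _ (fun i => hμ i.succ) (fun i => hν i.succ) _ fun i => h i.succ)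

end LeCam

theorem leCam_poisson_approximation {d n : ℕ}
    (V : Fin n → Measure (Fin d → ℝ)) (hV : ∀ i, IsProbabilityMeasure (V i))
    (p : Fin n → ℝ) (hp0 : ∀ i, 0 ≤ p i) (hp1 : ∀ i, p i ≤ 1)
    (F : Fin n → Measure (Fin d → ℝ))
    (hF : ∀ i, F i = ENNReal.ofReal (1 - p i) • Measure.dirac 0 + ENNReal.ofReal (p i) • V i) :
    dTV (convList (List.ofFn F)) (convList (List.ofFn fun i => epois1 (F i)))
      ≤ ∑ i : Fin n, p i ^ 2 := by
  have hF' : ∀ i, F i = rareMark (p i) (V i) := hF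
  have hprob : ∀ i, IsProbabilityMeasure (F i) := fun i => by
    have := hV i
    rw [hF' i]
    exact isProbabilityMeasure_rareMark (hp0 i) (hp1 i) (V i)
  have hprob' : ∀ i, IsProbabilityMeasure (epois1 (F i)) := fun i => by
    have := hprob i
    infer_instance
  have := isProbabilityMeasure_convList_ofFn F hprob
  have := isProbabilityMeasure_convList_ofFn _ hprob'
  refine DominatedUpTo.dTV_le (Finset.sum_nonneg fun i _ => sq_nonneg (p i)) ?_
  rw [ENNReal.ofReal_sum_of_nonneg fun i _ => sq_nonneg (p i)]
  refine dominatedUpTo_convList_ofFn _ _ hprob hprob' _ fun i => ?_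
  have := hV i
  rw [hF' i]
  exact dominatedUpTo_epois1_rareMark (hp0 i) (hp1 i) (V i)
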